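/- Let β_{ij} be any n×n matrix (two-tensor) and let N be a unit vector in ℝⁿ; set q^{ij} = δ^{ij} − N^iN^j. Then δ^{ij}δ^{kl}β_{ki}β_{lj} ≤ C_n(δ^{ij}q^{kl}β_{ki}β_{lj} + |β̂|² + (tr β)²), where β̂_{ij} = β_{ij} − β_{ji} is the antisymmetric part, tr β = δ^{ij}β_{ij}, and C_n depends only on n. In particular, for β symmetric and traceless, (N^iN^kβ_{ki})² = (q^{ik}β_{ki})² ≤ n q^{ij}q^{kl}β_{ki}β_{lj}. -/

import Mathlib

noncomputable section

/-!
Let `p = N ⊗ N` and `q = 1 - p` be the orthogonal projections onto the line of `N` and onto its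
complement, and measure matrices by the Frobenius norm.  Then
`β = q β + p (β - βᵀ) + (q β p)ᵀ + (p β p)ᵀ`: the first and third terms are bounded by `‖q β‖`, the
second by `‖β - βᵀ‖`, and `p β p = tr (p β) p` with `tr (p β) = tr β - tr (q β)` and
`|tr (q β)| ≤ √n ‖q β‖`.  The triangle inequality gives the first estimate.
For traceless `β` the second one is `tr (p β) = - tr (q β q)` together with `|tr A| ≤ √n ‖A‖`.
-/

open Matrix
open scoped Matrix.Norms.Frobenius

section FrobeniusNorm

variable {m n α : Type*} [Fintype m] [Fintype n]

lemma frobenius_norm_sq_eq_sum [SeminormedAddCommGroup α] (A : Matrix m n α) :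
    ‖A‖ ^ 2 = ∑ i, ∑ j, ‖A i j‖ ^ 2 := by
  rw [frobenius_norm_def, ← Real.sqrt_eq_rpow, Real.sq_sqrt (by positivity)]
  simp only [Real.rpow_two]

lemma sum_sum_sq_eq_frobenius_norm_sq (A : Matrix m n ℝ) : ∑ j, ∑ i, A i j ^ 2 = ‖A‖ ^ 2 := by
  rw [Finset.sum_comm, frobenius_norm_sq_eq_sum]
  simp only [Real.norm_eq_abs, sq_abs]

lemma frobenius_norm_sq_eq_trace (A : Matrix m n ℝ) : ‖A‖ ^ 2 = trace (Aᵀ * A) := by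
  rw [← sum_sum_sq_eq_frobenius_norm_sq]
  simp only [trace, diag_apply, mul_apply, transpose_apply, sq]

lemma frobenius_norm_sq_vecMulVec [SeminormedRing α] [NormMulClass α] (x : m → α) (y : n → α) :
    ‖vecMulVec x y‖ ^ 2 = (∑ i, ‖x i‖ ^ 2) * ∑ j, ‖y j‖ ^ 2 := by
  simp only [frobenius_norm_sq_eq_sum, vecMulVec_apply, norm_mul, mul_pow, Finset.sum_mul_sum]

lemma norm_trace_sq_le_card_mul_norm_sq [SeminormedAddCommGroup α] (A : Matrix n n α) :
    ‖trace A‖ ^ 2 ≤ Fintype.card n * ‖A‖ ^ 2 :=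
  calc ‖trace A‖ ^ 2 ≤ (∑ i, ‖A i i‖) ^ 2 := by gcongr; exact norm_sum_le _ _
    _ ≤ Fintype.card n * ∑ i, ‖A i i‖ ^ 2 := sq_sum_le_card_mul_sum_sq
    _ ≤ Fintype.card n * ‖A‖ ^ 2 := by
      rw [frobenius_norm_sq_eq_sum]
      gcongr with i
      exact Finset.single_le_sum (f := fun j => ‖A i j‖ ^ 2) (fun _ _ => sq_nonneg _)
        (Finset.mem_univ i)

lemma norm_trace_le_sqrt_card_mul_norm [SeminormedAddCommGroup α] (A : Matrix n n α) :
    ‖trace A‖ ≤ √(Fintype.card n) * ‖A‖ := by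
  refine le_of_sq_le_sq ?_ (by positivity)
  simpa only [mul_pow, Real.sq_sqrt (Nat.cast_nonneg _)] using norm_trace_sq_le_card_mul_norm_sq A

lemma norm_trace_mul_sq_le_of_isIdempotentElem [SeminormedCommRing α] {Q : Matrix n n α}
    (hQ : IsIdempotentElem Q) (A : Matrix n n α) :
    ‖trace (Q * A)‖ ^ 2 ≤ Fintype.card n * ‖Q * A * Q‖ ^ 2 := by
  have htrace : trace (Q * A * Q) = trace (Q * A) := by
    rw [trace_mul_comm, ← Matrix.mul_assoc, hQ.eq]
  exact htrace ▸ norm_trace_sq_le_card_mul_norm_sq (Q * A * Q)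

end FrobeniusNorm

section Contraction

variable {m n : Type*} [Fintype m] [Fintype n]

lemma transpose_eq_of_isStarProjection {α : Type*} [NonUnitalNonAssocSemiring α] [Star α]
    [TrivialStar α] {Q : Matrix n n α} (hQ : IsStarProjection Q) : Qᵀ = Q := by
  simpa only [star_eq_conjTranspose, conjTranspose_eq_transpose_of_trivial]
    using hQ.isSelfAdjoint.star_eq

lemma sum_mul_mul_mul_eq_trace {α : Type*} [CommSemiring α] (Q : Matrix m m α) (R : Matrix n n α)
    (β : Matrix m n α) :
    ∑ i, ∑ j, ∑ k, ∑ l, R i j * Q k l * β k i * β l j = trace (Rᵀ * (βᵀ * (Q * β))) := by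
  rw [Finset.sum_comm]
  simp only [trace, diag_apply, mul_apply, transpose_apply, Finset.mul_sum]
  congr! 4
  ring

lemma sum_mul_mul_mul_eq_norm_sq_of_isStarProjection {Q : Matrix m m ℝ} {R : Matrix n n ℝ}
    (hQ : IsStarProjection Q) (hR : IsStarProjection R) (β : Matrix m n ℝ) :
    ∑ i, ∑ j, ∑ k, ∑ l, R i j * Q k l * β k i * β l j = ‖Q * β * R‖ ^ 2 := by
  have hQ_sq : Qᵀ * Q = Q := by
    rw [transpose_eq_of_isStarProjection hQ, hQ.isIdempotentElem.eq]
  have hR_sq : R * Rᵀ = Rᵀ := by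
    rw [transpose_eq_of_isStarProjection hR, hR.isIdempotentElem.eq]
  calc ∑ i, ∑ j, ∑ k, ∑ l, R i j * Q k l * β k i * β l j
      = trace (R * Rᵀ * (βᵀ * (Qᵀ * Q * β))) := by rw [sum_mul_mul_mul_eq_trace, hQ_sq, hR_sq]
    _ = trace ((Q * β * R)ᵀ * (Q * β * R)) := by
        rw [Matrix.mul_assoc R, trace_mul_comm R]
        simp only [transpose_mul, Matrix.mul_assoc]
    _ = ‖Q * β * R‖ ^ 2 := (frobenius_norm_sq_eq_trace _).symm

lemma sum_mul_mul_eq_norm_sq_of_isStarProjection {Q : Matrix m m ℝ} (hQ : IsStarProjection Q)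
    (β : Matrix m n ℝ) : ∑ i, ∑ k, ∑ l, Q k l * β k i * β l i = ‖Q * β‖ ^ 2 := by
  classical
  simpa [one_apply, ite_mul, Finset.sum_ite_irrel] using
    sum_mul_mul_mul_eq_norm_sq_of_isStarProjection hQ (.one (Matrix n n ℝ)) β

end Contraction

section RankOne

variable {ι : Type*} [Fintype ι] {N : ι → ℝ}

lemma isStarProjection_vecMulVec (hN : ∑ i, N i ^ 2 = 1) : IsStarProjection (vecMulVec N N) where
  isIdempotentElem := by
    have hdot : N ⬝ᵥ N = 1 := by simpa only [dotProduct, sq] using hN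
    rw [IsIdempotentElem, vecMulVec_mul_vecMulVec, hdot, one_smul]
  isSelfAdjoint := by
    rw [IsSelfAdjoint, star_eq_conjTranspose, conjTranspose_vecMulVec, star_trivial]

lemma norm_vecMulVec_self_eq_one (hN : ∑ i, N i ^ 2 = 1) : ‖vecMulVec N N‖ = 1 := by
  rw [← sq_eq_sq₀ (norm_nonneg _) zero_le_one, frobenius_norm_sq_vecMulVec]
  simp only [Real.norm_eq_abs, sq_abs, hN, one_pow, mul_one]

variable {m n α : Type*} [Fintype m] [Fintype n] [CommSemiring α]

lemma vecMulVec_mul_mul_vecMulVec (x : m → α) (y : n → α) (A : Matrix n m α) :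
    vecMulVec x y * A * vecMulVec x y = trace (vecMulVec x y * A) • vecMulVec x y := by
  rw [vecMulVec_mul, vecMulVec_mul_vecMulVec, trace_vecMulVec, dotProduct_comm, vecMulVec_smul]

lemma trace_vecMulVec_mul (x : m → α) (y : n → α) (A : Matrix n m α) :
    trace (vecMulVec x y * A) = ∑ i, ∑ k, x i * y k * A k i := by
  simp only [trace, diag_apply, mul_apply, vecMulVec_apply]

end RankOne

section TangentialProjection

variable {ι : Type*} [DecidableEq ι]

/-- The matrix `q = δ - N ⊗ N`, which for a unit vector `N` is the orthogonal projection onto the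
hyperplane normal to `N`. -/
def tangentialProj (N : ι → ℝ) : Matrix ι ι ℝ := 1 - vecMulVec N N

lemma tangentialProj_apply (N : ι → ℝ) (i j : ι) :
    tangentialProj N i j = (if i = j then 1 else 0) - N i * N j := by
  rw [tangentialProj, Matrix.sub_apply, one_apply, vecMulVec_apply]

variable [Fintype ι] {N : ι → ℝ}

lemma isStarProjection_tangentialProj (hN : ∑ i, N i ^ 2 = 1) :
    IsStarProjection (tangentialProj N) :=
  (isStarProjection_vecMulVec hN).one_sub

lemma tangentialProj_mul_add_vecMulVec_mul (N : ι → ℝ) (β : Matrix ι ι ℝ) :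
    tangentialProj N * β + vecMulVec N N * β = β := by
  rw [← add_mul, tangentialProj, sub_add_cancel, one_mul]

lemma trace_tangentialProj_mul (N : ι → ℝ) (β : Matrix ι ι ℝ) :
    trace (tangentialProj N * β) = trace β - trace (vecMulVec N N * β) := by
  rw [tangentialProj, one_sub_mul, trace_sub]

lemma norm_vecMulVec_mul_mul_vecMulVec_le (hN : ∑ i, N i ^ 2 = 1) (β : Matrix ι ι ℝ) :
    ‖vecMulVec N N * β * vecMulVec N N‖
      ≤ |trace β| + √(Fintype.card ι) * ‖tangentialProj N * β‖ :=
  calc ‖vecMulVec N N * β * vecMulVec N N‖ = |trace (vecMulVec N N * β)| := by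
        rw [vecMulVec_mul_mul_vecMulVec, norm_smul, norm_vecMulVec_self_eq_one hN, mul_one,
          Real.norm_eq_abs]
    _ = |trace β - trace (tangentialProj N * β)| := by
        rw [trace_tangentialProj_mul, sub_sub_cancel]
    _ ≤ |trace β| + |trace (tangentialProj N * β)| := abs_sub _ _
    _ ≤ |trace β| + √(Fintype.card ι) * ‖tangentialProj N * β‖ := by
        gcongr
        exact norm_trace_le_sqrt_card_mul_norm (tangentialProj N * β)

theorem norm_le_norm_tangentialProj_mul_add (hN : ∑ i, N i ^ 2 = 1) (β : Matrix ι ι ℝ) :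
    ‖β‖ ≤ (2 + √(Fintype.card ι)) * ‖tangentialProj N * β‖ + ‖β - βᵀ‖ + |trace β| := by
  set p := vecMulVec N N
  set q := tangentialProj N
  have hp_norm : ‖p‖ = 1 := norm_vecMulVec_self_eq_one hN
  have hp_transpose : pᵀ = p := transpose_eq_of_isStarProjection (isStarProjection_vecMulVec hN)
  have hdecomp : β = q * β + p * (β - βᵀ) + (q * β * p)ᵀ + (p * β * p)ᵀ := by
    have hβp : q * β * p + p * β * p = β * p := by
      rw [← add_mul, tangentialProj_mul_add_vecMulVec_mul]
    rw [add_assoc, ← transpose_add, hβp, transpose_mul, hp_transpose, add_assoc, ← mul_add,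
      sub_add_cancel, tangentialProj_mul_add_vecMulVec_mul]
  have hskew : ‖p * (β - βᵀ)‖ ≤ ‖β - βᵀ‖ := by
    simpa only [hp_norm, one_mul] using frobenius_norm_mul p (β - βᵀ)
  have hmixed : ‖(q * β * p)ᵀ‖ ≤ ‖q * β‖ := by
    simpa only [hp_norm, mul_one, frobenius_norm_transpose] using frobenius_norm_mul (q * β) p
  have hnormal : ‖(p * β * p)ᵀ‖ ≤ |trace β| + √(Fintype.card ι) * ‖q * β‖ := by
    rw [frobenius_norm_transpose]
    exact norm_vecMulVec_mul_mul_vecMulVec_le hN β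
  calc ‖β‖ = ‖q * β + p * (β - βᵀ) + (q * β * p)ᵀ + (p * β * p)ᵀ‖ := congrArg norm hdecomp
    _ ≤ ‖q * β‖ + ‖p * (β - βᵀ)‖ + ‖(q * β * p)ᵀ‖ + ‖(p * β * p)ᵀ‖ := norm_add₄_le
    _ ≤ (2 + √(Fintype.card ι)) * ‖q * β‖ + ‖β - βᵀ‖ + |trace β| := by linarith

theorem norm_sq_le_norm_tangentialProj_mul_sq_add (hN : ∑ i, N i ^ 2 = 1) (β : Matrix ι ι ℝ) :
    ‖β‖ ^ 2 ≤ ((2 + √(Fintype.card ι)) ^ 2 + 2) *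
      (‖tangentialProj N * β‖ ^ 2 + ‖β - βᵀ‖ ^ 2 + trace β ^ 2) := by
  have cauchy_schwarz (c x y z : ℝ) :
      (c * x + y + z) ^ 2 ≤ (c ^ 2 + 2) * (x ^ 2 + y ^ 2 + z ^ 2) := by
    linarith [sq_nonneg (c * y - x), sq_nonneg (c * z - x), sq_nonneg (y - z)]
  calc ‖β‖ ^ 2
      ≤ ((2 + √(Fintype.card ι)) * ‖tangentialProj N * β‖ + ‖β - βᵀ‖ + |trace β|) ^ 2 := by
        gcongr
        exact norm_le_norm_tangentialProj_mul_add hN β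
    _ ≤ _ := by simpa only [sq_abs] using cauchy_schwarz _ _ _ |trace β|

theorem trace_vecMulVec_mul_sq_le_of_trace_eq_zero (hN : ∑ i, N i ^ 2 = 1)
    {β : Matrix ι ι ℝ} (hβ : trace β = 0) :
    trace (vecMulVec N N * β) ^ 2
      ≤ Fintype.card ι * ‖tangentialProj N * β * tangentialProj N‖ ^ 2 := by
  have hq : IsIdempotentElem (tangentialProj N) :=
    (isStarProjection_tangentialProj hN).isIdempotentElem
  simpa only [trace_tangentialProj_mul, hβ, zero_sub, norm_neg, Real.norm_eq_abs, sq_abs] using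
    norm_trace_mul_sq_le_of_isIdempotentElem hq β

end TangentialProjection

theorem tensor_tangential_inequality_general (ι : Type*) [Fintype ι] [DecidableEq ι] :
    (∃ C > (0:ℝ), ∀ (β : Matrix ι ι ℝ) (N : ι → ℝ),
      (∑ i, N i ^ 2) = 1 →
      (∑ i, ∑ k, (β k i) ^ 2)
        ≤ C * ((∑ i, ∑ k, ∑ l,
              ((if k = l then (1:ℝ) else 0) - N k * N l) * β k i * β l i)
            + (∑ i, ∑ k, (β k i - β i k) ^ 2) + (∑ i, β i i) ^ 2)) ∧
    ∀ (β : Matrix ι ι ℝ) (N : ι → ℝ),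
      (∑ i, N i ^ 2) = 1 → (∑ i, β i i) = 0 →
      (∑ i, ∑ k, N i * N k * β k i) ^ 2
          = (∑ i, ∑ k, ((if i = k then (1:ℝ) else 0) - N i * N k) * β k i) ^ 2 ∧
      (∑ i, ∑ k, N i * N k * β k i) ^ 2
          ≤ Fintype.card ι * ∑ i, ∑ j, ∑ k, ∑ l,
              ((if i = j then (1:ℝ) else 0) - N i * N j)
                * ((if k = l then (1:ℝ) else 0) - N k * N l) * β k i * β l j := by
  refine ⟨⟨(2 + √(Fintype.card ι)) ^ 2 + 2, by positivity, fun β N hN => ?_⟩,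
    fun β N hN hβ => ?_⟩
  · have hskew : ∑ i, ∑ k, (β k i - β i k) ^ 2 = ‖β - βᵀ‖ ^ 2 :=
      sum_sum_sq_eq_frobenius_norm_sq (β - βᵀ)
    simp only [← tangentialProj_apply]
    rw [sum_sum_sq_eq_frobenius_norm_sq, hskew,
      sum_mul_mul_eq_norm_sq_of_isStarProjection (isStarProjection_tangentialProj hN)]
    exact norm_sq_le_norm_tangentialProj_mul_sq_add hN β
  · have htrace : trace β = 0 := hβ
    have htangential : ∑ i, ∑ k, tangentialProj N i k * β k i = -trace (vecMulVec N N * β) := by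
      rw [← zero_sub, ← htrace, ← trace_tangentialProj_mul]
      rfl
    have hq := isStarProjection_tangentialProj hN
    simp only [← tangentialProj_apply]
    rw [← trace_vecMulVec_mul, htangential, neg_sq,
      sum_mul_mul_mul_eq_norm_sq_of_isStarProjection hq hq]
    exact ⟨rfl, trace_vecMulVec_mul_sq_le_of_trace_eq_zero hN htrace⟩

/-- (11.2) and its consequence.  For any two-tensor `β` and unit vector
`N`, with `q^{ij} = δ^{ij} − N^i N^j`:
`δ^{ij}δ^{kl}β_{ki}β_{lj} ≤ C_n (δ^{ij}q^{kl}β_{ki}β_{lj} + |β̂|² + (tr β)²)`,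
and for symmetric traceless `β`,
`(N^iN^kβ_{ki})² = (q^{ik}β_{ki})² ≤ n q^{ij}q^{kl}β_{ki}β_{lj}`. -/
theorem tensor_tangential_inequality (n : ℕ) :
    (∃ C > (0:ℝ), ∀ (β : Matrix (Fin n) (Fin n) ℝ) (N : Fin n → ℝ),
      (∑ i, N i ^ 2) = 1 →
      (∑ i, ∑ k, (β k i) ^ 2)
        ≤ C * ((∑ i, ∑ k, ∑ l,
              ((if k = l then (1:ℝ) else 0) - N k * N l) * β k i * β l i)
            + (∑ i, ∑ k, (β k i - β i k) ^ 2) + (∑ i, β i i) ^ 2)) ∧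
    ∀ (β : Matrix (Fin n) (Fin n) ℝ) (N : Fin n → ℝ),
      (∑ i, N i ^ 2) = 1 →
      (∀ i j, β i j = β j i) → (∑ i, β i i) = 0 →
      (∑ i, ∑ k, N i * N k * β k i) ^ 2
          = (∑ i, ∑ k, ((if i = k then (1:ℝ) else 0) - N i * N k) * β k i) ^ 2 ∧
      (∑ i, ∑ k, N i * N k * β k i) ^ 2
          ≤ n * ∑ i, ∑ j, ∑ k, ∑ l,
              ((if i = j then (1:ℝ) else 0) - N i * N j)
                * ((if k = l then (1:ℝ) else 0) - N k * N l) * β k i * β l j := by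
  obtain ⟨h_full, h_normal⟩ := tensor_tangential_inequality_general (Fin n)
  exact ⟨h_full, fun β N hN _ hβ => by simpa only [Fintype.card_fin] using h_normal β N hN hβ⟩

end
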